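/- Let G1 and G2 be graphs on N vertices with real symmetric adjacency matrices A1 and A2, and suppose A1 = P A2 Pᵀ for some N×N permutation matrix P (i.e., G1 and G2 are isomorphic). For a real symmetric N×N matrix A, let 𝒱(A) denote the set of real orthogonal N×N matrices V such that A = V Λ Vᵀ for some diagonal matrix Λ. Then for any real symmetric N×N matrix B, the infimum over V1 ∈ 𝒱(A1) and W ∈ 𝒱(B) of the Frobenius norm ‖V1·W − I‖_F equals the infimum over V2 ∈ 𝒱(A2) and W ∈ 𝒱(B) of ‖V2·W − I‖_F. -/

import Mathlib

open Matrix

/-- Frobenius norm of a real square matrix. -/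
noncomputable def frobNorm {N : ℕ} (M : Matrix (Fin N) (Fin N) ℝ) : ℝ :=
  Real.sqrt (∑ i, ∑ j, (M i j) ^ 2)

/-- The set of real orthogonal eigenvector matrices of a real symmetric matrix `A`:
orthogonal `V` such that `A = V Λ Vᵀ` for some diagonal `Λ`. -/
def eigSet {N : ℕ} (A : Matrix (Fin N) (Fin N) ℝ) : Set (Matrix (Fin N) (Fin N) ℝ) :=
  {V | Vᵀ * V = 1 ∧ ∃ Λ : Matrix (Fin N) (Fin N) ℝ, Λ.IsDiag ∧ A = V * Λ * Vᵀ}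

theorem eigSet_sub {N : ℕ} (A V : Matrix (Fin N) (Fin N) ℝ) (s t : Equiv.Perm (Fin N))
    (h : V ∈ eigSet A) : V.submatrix s t ∈ eigSet (A.submatrix s s) := by
  obtain ⟨h1, L, hL, h2⟩ := h
  refine ⟨?_, L.submatrix t t, hL.submatrix t.injective, ?_⟩
  · rw [Matrix.transpose_submatrix, Matrix.submatrix_mul_equiv, h1, Matrix.submatrix_one_equiv]
  · rw [Matrix.transpose_submatrix, Matrix.submatrix_mul_equiv, Matrix.submatrix_mul_equiv, h2]

theorem frobNorm_sub {N : ℕ} (M : Matrix (Fin N) (Fin N) ℝ) (s : Equiv.Perm (Fin N)) :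
    frobNorm (M.submatrix s s) = frobNorm M := by
  unfold frobNorm
  congr 1
  rw [← Equiv.sum_comp s (fun i => ∑ j, (M i j) ^ 2)]
  refine Finset.sum_congr rfl fun i _ => ?_
  exact Equiv.sum_comp s (fun j => (M (s i) j) ^ 2)

theorem dual_sub {N : ℕ} (A B : Matrix (Fin N) (Fin N) ℝ) (s : Equiv.Perm (Fin N)) :
    {x : ℝ | ∃ V2 ∈ eigSet A, ∃ W ∈ eigSet B, x = frobNorm (V2 * W - 1)} ⊆
    {x : ℝ | ∃ V1 ∈ eigSet (A.submatrix s s), ∃ W ∈ eigSet B, x = frobNorm (V1 * W - 1)} := by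
  rintro x ⟨V, hV, W, hW, rfl⟩
  refine ⟨_, eigSet_sub A V s (Equiv.refl _) hV, W.submatrix (Equiv.refl _) s,
    by simpa using eigSet_sub B W (Equiv.refl _) s hW, ?_⟩
  rw [Matrix.submatrix_mul_equiv, ← frobNorm_sub (V * W - 1) s, Matrix.submatrix_sub,
    Pi.sub_apply, Pi.sub_apply, Matrix.submatrix_one_equiv]

theorem dualness_invariant_under_isomorphism {N : ℕ}
    (A1 A2 B : Matrix (Fin N) (Fin N) ℝ)
    (hA1 : A1.IsSymm) (hA2 : A2.IsSymm) (hB : B.IsSymm)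
    (P : Matrix (Fin N) (Fin N) ℝ)
    (hP : ∃ σ : Equiv.Perm (Fin N), P = σ.permMatrix ℝ)
    (hiso : A1 = P * A2 * Pᵀ) :
    sInf {x : ℝ | ∃ V1 ∈ eigSet A1, ∃ W ∈ eigSet B, x = frobNorm (V1 * W - 1)} =
    sInf {x : ℝ | ∃ V2 ∈ eigSet A2, ∃ W ∈ eigSet B, x = frobNorm (V2 * W - 1)} := by
  obtain ⟨s, rfl⟩ := hP
  have hA : A1 = A2.submatrix s s := by
    rw [hiso, Matrix.transpose_permMatrix]
    ext i j
    simp [Equiv.Perm.permMatrix, PEquiv.toMatrix_toPEquiv_mul, PEquiv.mul_toMatrix_toPEquiv]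
    rfl
  have hA' : A2 = A1.submatrix s.symm s.symm := by
    rw [hA]; ext i j; simp
  congr 1
  apply Set.Subset.antisymm
  · conv_rhs => rw [hA']
    exact dual_sub A1 B s.symm
  · rw [hA]
    exact dual_sub A2 B s
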